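/- Every 3-dimensional complex Poisson algebra (P, ·, {-,-}) is isomorphic to one of the following Poisson algebras, each given on a basis e₁,e₂,e₃ (all unlisted products of basis vectors are zero or determined by commutativity of · and anticommutativity of {-,-}): P₃,₁: all products zero; P₃,₂: {e₁,e₂}=e₃; P₃,₃: {e₁,e₂}=e₂, {e₁,e₃}=e₂+e₃; P₃,₄^α (α ∈ ℂ): {e₁,e₂}=e₂, {e₁,e₃}=αe₃; P₃,₅: {e₁,e₂}=e₃, {e₁,e₃}=−2e₁, {e₂,e₃}=2e₂; P₃,₆: e₁·e₁=e₂, e₁·e₂=e₃; P₃,₇: e₁·e₁=e₁, e₂·e₂=e₂, e₃·e₃=e₃; P₃,₈: e₁·e₁=e₁, e₂·e₂=e₂, e₂·e₃=e₃; P₃,₉: e₁·e₁=e₁, e₁·e₂=e₂, e₁·e₃=e₃, e₂·e₂=e₃; P₃,₁₀: e₁·e₁=e₁, e₂·e₂=e₂; P₃,₁₁: e₁·e₁=e₁, e₁·e₂=e₂; P₃,₁₂: e₁·e₁=e₁, e₂·e₂=e₃; P₃,₁₃: e₁·e₁=e₂; P₃,₁₄: e₁·e₁=e₂, {e₁,e₃}=e₃;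 P₃,₁₅: e₁·e₁=e₂, {e₁,e₃}=e₂; P₃,₁₆^α (α ∈ ℂ): e₁·e₂=e₃, {e₁,e₂}=αe₃; P₃,₁₇: e₁·e₁=e₁, e₁·e₂=e₂, e₁·e₃=e₃; P₃,₁₈: e₁·e₁=e₁, e₁·e₂=e₂, e₁·e₃=e₃, {e₂,e₃}=e₂; P₃,₁₉: e₁·e₁=e₁; P₃,₂₀: e₁·e₁=e₁, {e₂,e₃}=e₂. -/

import Mathlib

open scoped BigOperators

/-- The bilinear map on `Fin n → ℂ` determined by structure constants `c`. -/
noncomputable def sb {n : ℕ} (c : Fin n → Fin n → Fin n → ℂ) :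
    (Fin n → ℂ) →ₗ[ℂ] (Fin n → ℂ) →ₗ[ℂ] (Fin n → ℂ) :=
  LinearMap.mk₂ ℂ (fun x y k => ∑ a, ∑ b, c a b k * (x a * y b))
    (fun x x' y => by
      funext k
      simp [add_mul, mul_add, Finset.sum_add_distrib])
    (fun r x y => by
      funext k
      simp only [Pi.smul_apply, smul_eq_mul, Finset.mul_sum]
      exact Finset.sum_congr rfl fun a _ => Finset.sum_congr rfl fun b _ => by ring)
    (fun x y y' => by
      funext k
      simp [mul_add, Finset.sum_add_distrib])
    (fun r x y => by
      funext k
      simp only [Pi.smul_apply, smul_eq_mul, Finset.mul_sum]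
      exact Finset.sum_congr rfl fun a _ => Finset.sum_congr rfl fun b _ => by ring)

/-- Isomorphism of the Poisson-type double algebra `(P, m, b)` with the double
algebra on `Fin 3 → ℂ` given by `(m', b')`. -/
def IsoP (P : Type*) [AddCommGroup P] [Module ℂ P]
    (m b : P →ₗ[ℂ] P →ₗ[ℂ] P)
    (m' b' : (Fin 3 → ℂ) →ₗ[ℂ] (Fin 3 → ℂ) →ₗ[ℂ] (Fin 3 → ℂ)) : Prop :=
  ∃ φ : P ≃ₗ[ℂ] (Fin 3 → ℂ),
    (∀ x y, φ (m x y) = m' (φ x) (φ y)) ∧ (∀ x y, φ (b x y) = b' (φ x) (φ y))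

/- structure constants of the commutative associative products -/
def cm6 : Fin 3 → Fin 3 → Fin 3 → ℂ :=
  ![![![0,1,0],![0,0,1],![0,0,0]], ![![0,0,1],![0,0,0],![0,0,0]], ![![0,0,0],![0,0,0],![0,0,0]]]
def cm7 : Fin 3 → Fin 3 → Fin 3 → ℂ :=
  ![![![1,0,0],![0,0,0],![0,0,0]], ![![0,0,0],![0,1,0],![0,0,0]], ![![0,0,0],![0,0,0],![0,0,1]]]
def cm8 : Fin 3 → Fin 3 → Fin 3 → ℂ :=
  ![![![1,0,0],![0,0,0],![0,0,0]], ![![0,0,0],![0,1,0],![0,0,1]], ![![0,0,0],![0,0,1],![0,0,0]]]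
def cm9 : Fin 3 → Fin 3 → Fin 3 → ℂ :=
  ![![![1,0,0],![0,1,0],![0,0,1]], ![![0,1,0],![0,0,1],![0,0,0]], ![![0,0,1],![0,0,0],![0,0,0]]]
def cm10 : Fin 3 → Fin 3 → Fin 3 → ℂ :=
  ![![![1,0,0],![0,0,0],![0,0,0]], ![![0,0,0],![0,1,0],![0,0,0]], ![![0,0,0],![0,0,0],![0,0,0]]]
def cm11 : Fin 3 → Fin 3 → Fin 3 → ℂ :=
  ![![![1,0,0],![0,1,0],![0,0,0]], ![![0,1,0],![0,0,0],![0,0,0]], ![![0,0,0],![0,0,0],![0,0,0]]]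
def cm12 : Fin 3 → Fin 3 → Fin 3 → ℂ :=
  ![![![1,0,0],![0,0,0],![0,0,0]], ![![0,0,0],![0,0,1],![0,0,0]], ![![0,0,0],![0,0,0],![0,0,0]]]
def cm13 : Fin 3 → Fin 3 → Fin 3 → ℂ :=
  ![![![0,1,0],![0,0,0],![0,0,0]], ![![0,0,0],![0,0,0],![0,0,0]], ![![0,0,0],![0,0,0],![0,0,0]]]
def cm16 : Fin 3 → Fin 3 → Fin 3 → ℂ :=
  ![![![0,0,0],![0,0,1],![0,0,0]], ![![0,0,1],![0,0,0],![0,0,0]], ![![0,0,0],![0,0,0],![0,0,0]]]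
def cm17 : Fin 3 → Fin 3 → Fin 3 → ℂ :=
  ![![![1,0,0],![0,1,0],![0,0,1]], ![![0,1,0],![0,0,0],![0,0,0]], ![![0,0,1],![0,0,0],![0,0,0]]]
def cm19 : Fin 3 → Fin 3 → Fin 3 → ℂ :=
  ![![![1,0,0],![0,0,0],![0,0,0]], ![![0,0,0],![0,0,0],![0,0,0]], ![![0,0,0],![0,0,0],![0,0,0]]]

/- structure constants of the Lie brackets -/
def cb2 : Fin 3 → Fin 3 → Fin 3 → ℂ :=
  ![![![0,0,0],![0,0,1],![0,0,0]], ![![0,0,-1],![0,0,0],![0,0,0]], ![![0,0,0],![0,0,0],![0,0,0]]]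
def cb3 : Fin 3 → Fin 3 → Fin 3 → ℂ :=
  ![![![0,0,0],![0,1,0],![0,1,1]], ![![0,-1,0],![0,0,0],![0,0,0]], ![![0,-1,-1],![0,0,0],![0,0,0]]]
def cb4 (α : ℂ) : Fin 3 → Fin 3 → Fin 3 → ℂ :=
  ![![![0,0,0],![0,1,0],![0,0,α]], ![![0,-1,0],![0,0,0],![0,0,0]], ![![0,0,-α],![0,0,0],![0,0,0]]]
def cb5 : Fin 3 → Fin 3 → Fin 3 → ℂ :=
  ![![![0,0,0],![0,0,1],![-2,0,0]], ![![0,0,-1],![0,0,0],![0,2,0]], ![![2,0,0],![0,-2,0],![0,0,0]]]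
def cb14 : Fin 3 → Fin 3 → Fin 3 → ℂ :=
  ![![![0,0,0],![0,0,0],![0,0,1]], ![![0,0,0],![0,0,0],![0,0,0]], ![![0,0,-1],![0,0,0],![0,0,0]]]
def cb15 : Fin 3 → Fin 3 → Fin 3 → ℂ :=
  ![![![0,0,0],![0,0,0],![0,1,0]], ![![0,0,0],![0,0,0],![0,0,0]], ![![0,-1,0],![0,0,0],![0,0,0]]]
def cb16 (α : ℂ) : Fin 3 → Fin 3 → Fin 3 → ℂ :=
  ![![![0,0,0],![0,0,α],![0,0,0]], ![![0,0,-α],![0,0,0],![0,0,0]], ![![0,0,0],![0,0,0],![0,0,0]]]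
def cb18 : Fin 3 → Fin 3 → Fin 3 → ℂ :=
  ![![![0,0,0],![0,0,0],![0,0,0]], ![![0,0,0],![0,0,0],![0,1,0]], ![![0,0,0],![0,-1,0],![0,0,0]]]

/-! By Fitting's lemma, either the product has a nonzero idempotent or every multiplication map is
nilpotent. An idempotent `e` satisfies `{e, y} = 2 e·{e, y}`, hence `{e, y} = 0`, so brackets only
live on a complement of the idempotents, and the Peirce decomposition leaves few products. If all
multiplications are nilpotent and `u³ ≠ 0` for some `u`, then `u`, `u²`, `u³` is a basis; if
`u³ = 0` for all `u`, polarization over `ℂ` gives `P·P·P = 0`, and the product is a quadratic form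
with values in a line. If the product is zero, `P` is a Lie algebra: when every `{x, -}` is
nilpotent it is abelian or Heisenberg, and otherwise some `x`, `y ≠ 0` satisfy `{x, y} = y` and the
Jacobi identity determines the rest from the third eigenvalue of `{x, -}`. -/

open Module

section Tables

variable {R P ι : Type*} [CommRing R] [AddCommGroup P] [Module R P] [Fintype ι] [DecidableEq ι]
  {f : P →ₗ[R] P →ₗ[R] P} {f' : (ι → R) →ₗ[R] (ι → R) →ₗ[R] (ι → R)} {v : ι → P}

/-- The family `v` multiplies under `f` as the standard basis of `ι → R` multiplies under `f'`;
this is how the multiplication tables of the classification are compared with `f`. -/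
def HasTable (f : P →ₗ[R] P →ₗ[R] P) (v : ι → P)
    (f' : (ι → R) →ₗ[R] (ι → R) →ₗ[R] (ι → R)) : Prop :=
  ∀ i j, f (v i) (v j) = ∑ k, f' (Pi.single i 1) (Pi.single j 1) k • v k

lemma HasTable.of_comm [LinearOrder ι] (hf : ∀ x y, f x y = f y x)
    (hf' : ∀ i j, f' (Pi.single i 1) (Pi.single j 1) = f' (Pi.single j 1) (Pi.single i 1))
    (h : ∀ i j, i ≤ j → f (v i) (v j) = ∑ k, f' (Pi.single i 1) (Pi.single j 1) k • v k) :
    HasTable f v f' := fun i j ↦ by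
  rcases le_total i j with hij | hji
  · exact h i j hij
  · rw [hf, hf', h j i hji]

lemma HasTable.of_isAlt [LinearOrder ι] [NoZeroDivisors R] [CharZero R] (hf : f.IsAlt)
    (hf' : ∀ i j, f' (Pi.single i 1) (Pi.single j 1) = -f' (Pi.single j 1) (Pi.single i 1))
    (h : ∀ i j, i < j → f (v i) (v j) = ∑ k, f' (Pi.single i 1) (Pi.single j 1) k • v k) :
    HasTable f v f' := fun i j ↦ by
  rcases lt_trichotomy i j with hij | rfl | hji
  · exact h i j hij
  · have hdiag k : f' (Pi.single i 1) (Pi.single i 1) k = 0 :=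
      self_eq_neg.1 (congrFun (hf' i i) k)
    simp [hf.self_eq_zero, hdiag]
  · simp [← hf.neg (v j), hf' i j, h j i hji]

lemma HasTable.equivFun_apply {v : Basis ι R P} (h : HasTable f v f') (x y : P) :
    v.equivFun (f x y) = f' (v.equivFun x) (v.equivFun y) := by
  have key : f.compr₂ v.equivFun.toLinearMap =
      f'.compl₁₂ v.equivFun.toLinearMap v.equivFun.toLinearMap := by
    refine v.ext fun i ↦ v.ext fun j ↦ v.equivFun.symm.injective ?_
    simpa [Basis.equivFun_symm_apply, Finsupp.single_eq_pi_single] using h i j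
  exact LinearMap.congr_fun₂ key x y

end Tables

@[simp]
lemma sb_single {n : ℕ} (c : Fin n → Fin n → Fin n → ℂ) (i j : Fin n) :
    sb c (Pi.single i 1) (Pi.single j 1) = c i j := by
  funext k
  simp [sb, Pi.single_apply]

section Poisson

variable {R P : Type*} [CommRing R] [AddCommGroup P] [Module R P]

/-- The bilinear map `m`, written `x · y` in the paper, is a commutative and associative
multiplication. -/
structure IsCommAssoc (m : P →ₗ[R] P →ₗ[R] P) : Prop where
  comm : ∀ x y, m x y = m y x
  assoc : ∀ x y z, m (m x y) z = m x (m y z)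

/-- The bilinear map `b` is a Lie bracket; the Jacobi identity is stated as the fact that every
`b x` is a derivation. -/
structure IsLie (b : P →ₗ[R] P →ₗ[R] P) : Prop where
  alt : b.IsAlt
  jacobi : ∀ x y z, b x (b y z) = b (b x y) z + b y (b x z)

/-- The pair `(m, b)` is a Poisson algebra structure on `P`. -/
structure IsPoisson (m b : P →ₗ[R] P →ₗ[R] P) : Prop extends IsCommAssoc m, IsLie b where
  leibniz : ∀ x y z, b (m x y) z = m (b x z) y + m x (b y z)

lemma IsCommAssoc.left_comm {m : P →ₗ[R] P →ₗ[R] P} (h : IsCommAssoc m) (x y z : P) :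
    m x (m y z) = m y (m x z) := by
  rw [← h.assoc, h.comm x, h.assoc]

lemma isCommAssoc_zero : IsCommAssoc (0 : P →ₗ[R] P →ₗ[R] P) :=
  ⟨fun _ _ ↦ rfl, fun _ _ _ ↦ rfl⟩

lemma IsLie.of_antisymm [IsAddTorsionFree P] {b : P →ₗ[R] P →ₗ[R] P}
    (hanti : ∀ x y, b x y = -b y x)
    (hjac : ∀ x y z, b (b x y) z + b (b y z) x + b (b z x) y = 0) : IsLie b where
  alt x := self_eq_neg.1 (hanti x x)
  jacobi x y z := by
    have hcyc := hjac x y z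
    rw [hanti (b y z), hanti (b z x), hanti z x, map_neg, neg_neg] at hcyc
    linear_combination (norm := module) -hcyc

lemma IsLie.isPoisson_zero {b : P →ₗ[R] P →ₗ[R] P} (h : IsLie b) : IsPoisson 0 b where
  toIsCommAssoc := isCommAssoc_zero
  toIsLie := h
  leibniz x y z := by simp

lemma IsPoisson.leibniz_right {m b : P →ₗ[R] P →ₗ[R] P} (h : IsPoisson m b) (x y z : P) :
    b x (m y z) = m (b x y) z + m y (b x z) := by
  rw [← h.alt.neg, h.leibniz, ← h.alt.neg y x, ← h.alt.neg z x]
  simp only [map_neg, LinearMap.neg_apply, neg_add]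

end Poisson

lemma IsPoisson.isoP {P : Type*} [AddCommGroup P] [Module ℂ P] {m b : P →ₗ[ℂ] P →ₗ[ℂ] P}
    {m' b' : (Fin 3 → ℂ) →ₗ[ℂ] (Fin 3 → ℂ) →ₗ[ℂ] (Fin 3 → ℂ)} (h : IsPoisson m b)
    (hdim : finrank ℂ P = 3) {v : Fin 3 → P} (hv : LinearIndependent ℂ v)
    (hm' : ∀ i j, m' (Pi.single i 1) (Pi.single j 1) = m' (Pi.single j 1) (Pi.single i 1))
    (hm : ∀ i j, i ≤ j → m (v i) (v j) = ∑ k, m' (Pi.single i 1) (Pi.single j 1) k • v k)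
    (hb' : ∀ i j, b' (Pi.single i 1) (Pi.single j 1) = -b' (Pi.single j 1) (Pi.single i 1))
    (hb : ∀ i j, i < j → b (v i) (v j) = ∑ k, b' (Pi.single i 1) (Pi.single j 1) k • v k) :
    IsoP P m b m' b' := by
  let w := basisOfLinearIndependentOfCardEqFinrank hv (by simp [hdim])
  have hw : (w : Fin 3 → P) = v := coe_basisOfLinearIndependentOfCardEqFinrank hv _
  have hmw : HasTable m w m' := hw ▸ .of_comm h.comm hm' hm
  have hbw : HasTable b w b' := hw ▸ .of_isAlt h.alt hb' hb
  exact ⟨w.equivFun, hmw.equivFun_apply, hbw.equivFun_apply⟩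

lemma snoc_pair {α : Type*} (x y z : α) : (Fin.snoc ![x, y] z : Fin 3 → α) = ![x, y, z] := by
  ext i
  fin_cases i <;> rfl

section LinearAlgebra

variable {K V W : Type*} [Field K] [AddCommGroup V] [Module K V] [AddCommGroup W] [Module K W]

lemma linearIndependent_vecCons_of_map_ne_zero (f : V →ₗ[K] W) {n : ℕ} {x : V} {v : Fin n → V}
    (hv : LinearIndependent K v) (hfv : ∀ i, f (v i) = 0) (hfx : f x ≠ 0) :
    LinearIndependent K (Matrix.vecCons x v) := by
  refine linearIndependent_finCons.2 ⟨hv, fun hx ↦ hfx ?_⟩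
  have hle : Submodule.span K (Set.range v) ≤ LinearMap.ker f :=
    Submodule.span_le.2 (Set.range_subset_iff.2 hfv)
  exact hle hx

lemma linearIndependent_iterate_of_map_ne_zero (f : V →ₗ[K] V) {x : V} (h2 : f (f x) ≠ 0)
    (h3 : f (f (f x)) = 0) : LinearIndependent K ![x, f x, f (f x)] := by
  refine linearIndependent_vecCons_of_map_ne_zero (f ∘ₗ f) ?_ ?_ (by simpa)
  · refine linearIndependent_vecCons_of_map_ne_zero f ?_ ?_ h2
    · simpa using h2
    · simpa using h3
  · simp [Fin.forall_fin_succ, h3]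

lemma linearIndependent_triple_iff {x y z : V} : LinearIndependent K ![x, y, z] ↔
    ∀ a b c : K, a • x + b • y + c • z = 0 → a = 0 ∧ b = 0 ∧ c = 0 := by
  rw [Fintype.linearIndependent_iff]
  constructor
  · intro h a b c habc
    simpa [Fin.forall_fin_succ] using h ![a, b, c] (by simpa [Fin.sum_univ_three] using habc)
  · intro h g hg
    simpa [Fin.forall_fin_succ] using h (g 0) (g 1) (g 2) (by simpa [Fin.sum_univ_three] using hg)

lemma linearIndependent_sum_smul_of_det_ne_zero {ι : Type*} [Fintype ι] [DecidableEq ι]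
    {A : Matrix ι ι K} (hA : A.det ≠ 0) {v : ι → V} (hv : LinearIndependent K v) :
    LinearIndependent K fun i ↦ ∑ j, A i j • v j := by
  have hrows := Matrix.linearIndependent_rows_of_det_ne_zero hA
  exact hrows.map' _ (LinearMap.ker_eq_bot.2 hv.fintypeLinearCombination_injective)

lemma linearIndependent_triple_of_det_ne_zero {x y z x' y' z' : V}
    (h : LinearIndependent K ![x, y, z]) {a₁ a₂ a₃ b₁ b₂ b₃ c₁ c₂ c₃ : K}
    (hdet : !![a₁, a₂, a₃; b₁, b₂, b₃; c₁, c₂, c₃].det ≠ 0) (hx : x' = a₁ • x + a₂ • y + a₃ • z)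
    (hy : y' = b₁ • x + b₂ • y + b₃ • z) (hz : z' = c₁ • x + c₂ • y + c₃ • z) :
    LinearIndependent K ![x', y', z'] := by
  convert linearIndependent_sum_smul_of_det_ne_zero hdet h using 1
  ext i
  fin_cases i <;> simp [Fin.sum_univ_three, hx, hy, hz]

lemma exists_coords_of_finrank_eq_three (hdim : finrank K V = 3) {x y z : V}
    (h : LinearIndependent K ![x, y, z]) (w : V) : ∃ a b c : K, w = a • x + b • y + c • z := by
  let v := basisOfLinearIndependentOfCardEqFinrank h (by simp [hdim])
  refine ⟨v.repr w 0, v.repr w 1, v.repr w 2, ?_⟩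
  simpa [v, Fin.sum_univ_three] using (v.sum_repr w).symm

lemma linearIndependent_triple_iff_notMem_span {x y z : V} (h : LinearIndependent K ![x, y]) :
    LinearIndependent K ![x, y, z] ↔ z ∉ Submodule.span K {x, y} := by
  rw [← snoc_pair, linearIndependent_finSnoc, Matrix.range_cons_cons_empty, and_iff_right h]

lemma exists_linearIndependent_triple_of_pair (hdim : 2 < finrank K V) {x y : V}
    (h : LinearIndependent K ![x, y]) : ∃ z, LinearIndependent K ![x, y, z] := by
  simpa only [snoc_pair] using exists_linearIndependent_snoc_of_lt_finrank h hdim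

lemma exists_linearIndependent_triple_of_ne_zero (hdim : 2 < finrank K V) {x : V}
    (hx : x ≠ 0) : ∃ y z, LinearIndependent K ![x, y, z] := by
  obtain ⟨y, hy⟩ := exists_linearIndependent_pair_of_one_lt_finrank (hdim.trans' one_lt_two) hx
  exact ⟨y, exists_linearIndependent_triple_of_pair hdim hy⟩

end LinearAlgebra

section Endomorphisms

variable {K V : Type*} [Field K] [AddCommGroup V] [Module K V]

lemma pow_finrank_eq_zero_of_isNilpotent [FiniteDimensional K V] {f : End K V}
    (hf : IsNilpotent f) : f ^ finrank K V = 0 := by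
  simpa [hf.charpoly_eq_X_pow_finrank] using f.aeval_self_charpoly

lemma exists_hasEigenvalue_ne_zero_of_not_isNilpotent [IsAlgClosed K] [FiniteDimensional K V]
    {f : End K V} (hf : ¬IsNilpotent f) : ∃ μ, μ ≠ 0 ∧ f.HasEigenvalue μ := by
  contrapose! hf
  have hroots : f.charpoly.roots = Multiset.replicate (finrank K V) 0 := by
    refine Multiset.eq_replicate.2 ⟨?_, fun μ hμ ↦ of_not_not fun hne ↦ hf μ hne ?_⟩
    · rw [← (IsAlgClosed.splits _).natDegree_eq_card_roots, f.charpoly_natDegree]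
    · exact (End.hasEigenvalue_iff_isRoot_charpoly f μ).2 (Polynomial.isRoot_of_mem_roots hμ)
  rw [LinearMap.isNilpotent_iff_charpoly,
    (IsAlgClosed.splits f.charpoly).eq_prod_roots_of_monic f.charpoly_monic, hroots]
  simp

lemma apply_apply_apply_eq_zero_of_isNilpotent (hdim : finrank K V = 3) {f : End K V}
    (hf : IsNilpotent f) (x : V) : f (f (f x)) = 0 := by
  have : FiniteDimensional K V := .of_finrank_pos (by omega)
  simpa [hdim, pow_succ] using LinearMap.congr_fun (pow_finrank_eq_zero_of_isNilpotent hf) x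

end Endomorphisms

section Idempotents

variable {R P : Type*} [CommRing R] [AddCommGroup P] [Module R P] {m b : P →ₗ[R] P →ₗ[R] P}

lemma IsCommAssoc.map_pow_apply (h : IsCommAssoc m) (x y : P) (n : ℕ) :
    m ((m x ^ n) y) = (m x ^ n : End R P) * m y := by
  induction n with
  | zero => simp
  | succ n ih =>
    ext z
    simp only [pow_succ', End.mul_apply, h.assoc, ih]

/-- The form of Fitting's lemma that applies to the multiplication maps `m x`. -/
lemma IsCommAssoc.exists_idempotent_or_isNilpotent [IsArtinian R P] (h : IsCommAssoc m) (x : P) :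
    (∃ w, m x w ≠ 0 ∧ m (m x w) (m x w) = m x w) ∨ IsNilpotent (m x) := by
  obtain ⟨n, hn⟩ := Filter.eventually_atTop.1 (LinearMap.eventually_iInf_range_pow_eq (m x))
  set a := (m x ^ n) x with ha_def
  have ha : m a = m x ^ (n + 1) := by rw [ha_def, h.map_pow_apply, pow_succ]
  have hrange : (m x ^ n).range = (m x ^ (n + 1 + (n + 1))).range :=
    (hn n le_rfl).symm.trans (hn _ (by omega))
  obtain ⟨z, hz⟩ : a ∈ (m x ^ (n + 1 + (n + 1))).range := hrange ▸ ⟨x, rfl⟩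
  have haaz : m a (m a z) = a := by rw [ha, ← End.mul_apply, ← pow_add, hz]
  by_cases h0 : m a z = 0
  · refine .inr ⟨n + 1, ?_⟩
    rw [← ha, ← haaz, h0, map_zero, map_zero]
  · have hxw : m x ((m x ^ n) z) = m a z := by rw [ha, pow_succ', End.mul_apply]
    refine .inl ⟨(m x ^ n) z, hxw ▸ h0, ?_⟩
    rw [hxw, h.assoc, h.comm z, ← h.assoc, haaz]

lemma IsPoisson.bracket_idempotent (h : IsPoisson m b) {e : P} (he : m e e = e) (y : P) :
    b e y = 0 := by
  have hD : b e y = m e (b e y) + m e (b e y) := by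
    conv_lhs => rw [← he, h.leibniz, h.comm (b e y)]
  have heD : m e (b e y) = 0 := by
    have := congrArg (m e) hD
    rwa [map_add, ← h.assoc, he, left_eq_add] at this
  rw [hD, heD, add_zero]

/-- Two nonzero orthogonal idempotents; without them, every nonzero idempotent is primitive. -/
def HasOrthogonalIdempotents (m : P →ₗ[R] P →ₗ[R] P) : Prop :=
  ∃ e f, e ≠ 0 ∧ f ≠ 0 ∧ m e e = e ∧ m f f = f ∧ m e f = 0

lemma IsCommAssoc.idempotent_eq_of_not_hasOrthogonalIdempotents (h : IsCommAssoc m)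
    (hprim : ¬HasOrthogonalIdempotents m) {e f : P} (he : m e e = e) (hf : m f f = f)
    (hef : m e f = f) (hf0 : f ≠ 0) : f = e := by
  by_contra hne
  refine hprim ⟨f, e - f, hf0, sub_ne_zero.2 (Ne.symm hne), hf, ?_, ?_⟩ <;>
    simp [he, hf, hef, h.comm f e]

lemma IsCommAssoc.isNilpotent_of_map_eq_zero [IsArtinian R P] (h : IsCommAssoc m)
    (hprim : ¬HasOrthogonalIdempotents m) {e u : P} (he0 : e ≠ 0) (he : m e e = e)
    (heu : m e u = 0) : IsNilpotent (m u) := by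
  refine (h.exists_idempotent_or_isNilpotent u).resolve_left ?_
  rintro ⟨w, hne, hidem⟩
  exact hprim ⟨e, m u w, he0, hne, he, hidem, by simp [← h.assoc, heu]⟩

lemma IsCommAssoc.isNilpotent_add (h : IsCommAssoc m) {x y : P} (hx : IsNilpotent (m x))
    (hy : IsNilpotent (m y)) : IsNilpotent (m (x + y)) := by
  rw [map_add]
  exact Commute.isNilpotent_add (LinearMap.ext fun z ↦ h.left_comm x y z) hx hy

end Idempotents

section CommAssoc

variable {K P : Type*} [Field K] [AddCommGroup P] [Module K P] {m b : P →ₗ[K] P →ₗ[K] P}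

lemma linearIndependent_of_orthogonal_idempotents {e f : P} (hf0 : f ≠ 0) (he0 : e ≠ 0)
    (he : m e e = e) (hef : m e f = 0) : LinearIndependent K ![e, f] :=
  linearIndependent_vecCons_of_map_ne_zero (m e) (by simpa) (by simpa) (he.symm ▸ he0)

lemma IsCommAssoc.exists_linearIndependent_triple_peirce (h : IsCommAssoc m)
    (hdim : 2 < finrank K P) {e x y : P} (he : m e e = e) (hli : LinearIndependent K ![x, y]) :
    ∃ z, LinearIndependent K ![x, y, z] ∧ (m e z = z ∨ m e z = 0) := by
  obtain ⟨u, hu⟩ := exists_linearIndependent_triple_of_pair hdim hli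
  simp only [linearIndependent_triple_iff_notMem_span hli] at hu ⊢
  have hee : m e (m e u) = m e u := by rw [← h.assoc, he]
  by_cases hmem : m e u ∈ Submodule.span K {x, y}
  · exact ⟨u - m e u, fun hu' ↦ hu (by simpa using add_mem hu' hmem), .inr (by simp [hee])⟩
  · exact ⟨m e u, hmem, .inl hee⟩

lemma IsCommAssoc.exists_peirce_vector (h : IsCommAssoc m) (hdim : 2 < finrank K P) {e f : P}
    (hli : LinearIndependent K ![e, f]) (he : m e e = e) (hf : m f f = f) (hef : m e f = 0) :
    ∃ z, LinearIndependent K ![e, f, z] ∧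
      (m e z = z ∧ m f z = 0 ∨ m e z = 0 ∧ m f z = z ∨ m e z = 0 ∧ m f z = 0) := by
  obtain ⟨u, hu⟩ := exists_linearIndependent_triple_of_pair hdim hli
  simp only [linearIndependent_triple_iff_notMem_span hli] at hu ⊢
  have hee x : m e (m e x) = m e x := by rw [← h.assoc, he]
  have hff x : m f (m f x) = m f x := by rw [← h.assoc, hf]
  have hefx x : m e (m f x) = 0 := by rw [← h.assoc, hef, LinearMap.map_zero₂]
  have hfex x : m f (m e x) = 0 := by rw [h.left_comm, hefx]
  by_cases he_mem : m e u ∈ Submodule.span K {e, f}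
  · by_cases hf_mem : m f u ∈ Submodule.span K {e, f}
    · refine ⟨u - m e u - m f u, fun hmem ↦ hu ?_, .inr (.inr ?_)⟩
      · simpa using add_mem (add_mem hmem hf_mem) he_mem
      · simp [hee, hff, hefx, hfex]
    · exact ⟨m f u, hf_mem, .inr (.inl ⟨hefx u, hff u⟩)⟩
  · exact ⟨m e u, he_mem, .inl ⟨hee u, hfex u⟩⟩

lemma IsPoisson.bracket_eq_zero_of_idempotents (h : IsPoisson m b) (hdim : finrank K P = 3)
    {e f z : P} (hli : LinearIndependent K ![e, f, z]) (he : m e e = e) (hf : m f f = f) :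
    b = 0 := by
  ext x y
  obtain ⟨a₁, a₂, a₃, rfl⟩ := exists_coords_of_finrank_eq_three hdim hli x
  obtain ⟨c₁, c₂, c₃, rfl⟩ := exists_coords_of_finrank_eq_three hdim hli y
  have hze : b z e = 0 := by simp [← h.alt.neg e z, h.bracket_idempotent he]
  have hzf : b z f = 0 := by simp [← h.alt.neg f z, h.bracket_idempotent hf]
  simp [h.bracket_idempotent he, h.bracket_idempotent hf, hze, hzf, h.alt.self_eq_zero z]

/-- Completing the square: a quadratic polynomial over `e` has a double root or splits. -/
lemma IsCommAssoc.exists_sq_zero_or_idempotent [IsAlgClosed K] [NeZero (2 : K)]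
    (h : IsCommAssoc m) {e z : P} (he : m e e = e) (hez : m e z = z) {p s : K}
    (hz : m z z = p • e + s • z) :
    (∃ a : K, m (z + a • e) (z + a • e) = 0) ∨
      ∃ a c : K, c ≠ 0 ∧ m (a • e + c • z) (a • e + c • z) = a • e + c • z := by
  have h2 : (2 : K) ≠ 0 := NeZero.ne 2
  have hze : m z e = z := (h.comm z e).trans hez
  obtain ⟨t, ht⟩ := IsAlgClosed.exists_eq_mul_self (p + s ^ 2 / 4)
  have h4 : (4 : K) ≠ 0 := by convert mul_ne_zero h2 h2 using 1; norm_num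
  by_cases ht0 : t = 0
  · refine .inl ⟨-s / 2, ?_⟩
    have hp : p = -s ^ 2 / 4 := by
      rw [ht0] at ht
      linear_combination ht
    simp only [map_add, map_smul, LinearMap.add_apply, LinearMap.smul_apply, he, hez, hze, hz, hp]
    match_scalars <;> field_simp <;> ring
  · refine .inr ⟨1 / 2 - s / (4 * t), 1 / (2 * t), div_ne_zero one_ne_zero (mul_ne_zero h2 ht0), ?_⟩
    have hp : p = t * t - s ^ 2 / 4 := by linear_combination ht
    simp only [map_add, map_smul, LinearMap.add_apply, LinearMap.smul_apply, he, hez, hze, hz, hp]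
    match_scalars <;> field_simp <;> ring

lemma IsCommAssoc.exists_isNilpotent_sub_smul [IsAlgClosed K] [FiniteDimensional K P]
    (h : IsCommAssoc m) (hprim : ¬HasOrthogonalIdempotents m) {e : P} (he0 : e ≠ 0)
    (hunit : ∀ x, m e x = x) (y : P) : ∃ c : K, IsNilpotent (m (y - c • e)) := by
  have : Nontrivial P := ⟨e, 0, he0⟩
  obtain ⟨c, hc⟩ := End.exists_eigenvalue (m y)
  obtain ⟨v, hv⟩ := hc.exists_hasEigenvector
  refine ⟨c, (h.exists_idempotent_or_isNilpotent _).resolve_left ?_⟩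
  rintro ⟨w, hne, hidem⟩
  have hinv : m (y - c • e) w = e :=
    h.idempotent_eq_of_not_hasOrthogonalIdempotents hprim (hunit e) hidem (hunit _) hne
  have hkill : m (y - c • e) v = 0 := by simp [hv.apply_eq_smul, hunit]
  refine hv.2 ?_
  rw [← hunit v, ← hinv, h.comm _ w, h.assoc, hkill, map_zero]

lemma IsCommAssoc.mul_eq_zero_of_sq_eq_zero [NeZero (2 : K)] (h : IsCommAssoc m) {x y : P}
    (hx : m x x = 0) (hy : m y y = 0) (hxy : m (x + y) (x + y) = 0) : m x y = 0 := by
  have h2 : (2 : K) • m x y = 0 := by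
    rw [← hxy]
    simp only [map_add, LinearMap.add_apply, hx, hy, h.comm y x]
    module
  exact (smul_eq_zero.1 h2).resolve_left (NeZero.ne 2)

lemma IsCommAssoc.mul_mul_eq_zero_of_cube_eq_zero [CharZero K] (h : IsCommAssoc m)
    (h3 : ∀ x, m x (m x x) = 0) (x y z : P) : m x (m y z) = 0 := by
  have hsq (x y : P) : m x (m y y) = 0 := by
    have hadd := h3 (x + y)
    have hsub := h3 (x - y)
    have hyxy : m y (m x y) = m x (m y y) := h.left_comm y x y
    simp only [map_add, map_sub, LinearMap.add_apply, LinearMap.sub_apply, h.comm y x, h3,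
      hyxy] at hadd hsub
    have h6 : (6 : K) • m x (m y y) = 0 := by linear_combination (norm := module) hadd + hsub
    simpa using h6
  have hyz := hsq x (y + z)
  simp only [map_add, LinearMap.add_apply, hsq, h.comm z y] at hyz
  have h2 : (2 : K) • m x (m y z) = 0 := by linear_combination (norm := module) hyz
  simpa using h2

lemma exists_mul_eq_smul_sq (hdim : finrank K P = 3) (h3 : ∀ x y z, m x (m y z) = 0) {x u : P}
    (hu : LinearIndependent K ![x, m x x, u]) : ∃ c : K, m x u = c • m x x := by
  obtain ⟨a, c, d, hxu⟩ := exists_coords_of_finrank_eq_three hdim hu (m x u)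
  have hxxu : (d * a) • x + (a + d * c) • m x x + (d * d) • u = 0 := by
    have h0 := h3 x x u
    rw [hxu] at h0
    simp only [map_add, map_smul, h3, hxu] at h0
    linear_combination (norm := module) h0
  obtain ⟨-, ha, hd⟩ := linearIndependent_triple_iff.1 hu _ _ _ hxxu
  have hd0 : d = 0 := mul_self_eq_zero.1 hd
  have ha0 : a = 0 := by simpa [hd0] using ha
  exact ⟨c, by simpa [ha0, hd0] using hxu⟩

lemma IsCommAssoc.exists_orthogonal_vector (h : IsCommAssoc m) (hdim : finrank K P = 3)
    (h3 : ∀ x y z, m x (m y z) = 0) {x : P} (hx : m x x ≠ 0) :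
    ∃ (z : P) (d : K), LinearIndependent K ![x, m x x, z] ∧ m x z = 0 ∧ m z z = d • m x x := by
  have hpair : LinearIndependent K ![x, m x x] :=
    linearIndependent_vecCons_of_map_ne_zero (m x) (by simpa) (by simp [h3]) hx
  obtain ⟨u, hu⟩ := exists_linearIndependent_triple_of_pair (by omega) hpair
  obtain ⟨c, hxu⟩ := exists_mul_eq_smul_sq hdim h3 hu
  have hli : LinearIndependent K ![x, m x x, u - c • x] :=
    linearIndependent_triple_of_det_ne_zero hu
      (show !![1, 0, 0; 0, 1, 0; -c, 0, 1].det ≠ 0 by simp [Matrix.det_fin_three])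
      (by module) (by module) (by module)
  have hxz : m x (u - c • x) = 0 := by simp [hxu]
  generalize u - c • x = z at hli hxz
  obtain ⟨a, d, g, hzz⟩ := exists_coords_of_finrank_eq_three hdim hli (m z z)
  have ha : a = 0 := by simpa [hzz, h3, hxz, hx] using h3 x z z
  have hg : g = 0 ∨ m z z = 0 := by
    have h0 := h3 z z z
    rw [hzz] at h0
    simpa [h3, h.comm z x, hxz] using h0
  rcases hg with hg | hzz0
  · exact ⟨z, d, hli, hxz, by simpa [ha, hg] using hzz⟩
  · exact ⟨z, 0, hli, hxz, by simpa using hzz0⟩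

end CommAssoc

section Lie

variable {K P : Type*} [Field K] [AddCommGroup P] [Module K P] {b : P →ₗ[K] P →ₗ[K] P}

/-- The normal form of the two-dimensional nonabelian Lie algebra spanned by `y` and `z`. -/
lemma exists_bracket_eq_left (hb : b.IsAlt) {e y z : P} (hli : LinearIndependent K ![e, y, z])
    {β γ : K} (hyz : b y z = β • y + γ • z) (hne : b y z ≠ 0) :
    ∃ p q : K, LinearIndependent K ![e, β • y + γ • z, p • y + q • z] ∧
      b (β • y + γ • z) (p • y + q • z) = β • y + γ • z := by
  obtain ⟨p, q, hpq⟩ : ∃ p q : K, β * q - γ * p = 1 := by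
    by_cases hβ : β = 0
    · have hγ : γ ≠ 0 := by
        rintro rfl
        simp [hyz, hβ] at hne
      exact ⟨-γ⁻¹, 0, by simp [hγ]⟩
    · exact ⟨0, β⁻¹, by simp [hβ]⟩
  refine ⟨p, q, ?_, ?_⟩
  · exact linearIndependent_triple_of_det_ne_zero hli
      (show !![1, 0, 0; 0, β, γ; 0, p, q].det ≠ 0 by simp [Matrix.det_fin_three, hpq])
      (by module) (by module) (by module)
  · calc b (β • y + γ • z) (p • y + q • z) = (β * q - γ * p) • b y z := by
          simp only [map_add, map_smul, LinearMap.add_apply, LinearMap.smul_apply,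
            hb.self_eq_zero, ← hb.neg y z]
          module
      _ = β • y + γ • z := by rw [hpq, one_smul, hyz]

lemma linearIndependent_of_bracket_bracket_eq_zero (hb : b.IsAlt) {x y : P} (hxy : b x y ≠ 0)
    (hx : b x (b x y) = 0) (hy : b y (b x y) = 0) : LinearIndependent K ![x, y, b x y] := by
  refine linearIndependent_triple_iff.2 fun p q r h0 ↦ ?_
  have hp : p = 0 := by
    simpa [hb.self_eq_zero, ← hb.neg x y, hy, hxy] using congrArg (b y) h0
  have hq : q = 0 := by simpa [hb.self_eq_zero, hx, hxy] using congrArg (b x) h0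
  exact ⟨hp, hq, by simpa [hp, hq, hxy] using h0⟩

lemma IsLie.bracket_bracket_eq_zero_of_forall_isNilpotent (hb : IsLie b)
    (hdim : finrank K P = 3) (hnil : ∀ x, IsNilpotent (b x)) (x y : P) : b x (b x y) = 0 := by
  by_contra hxxy
  have hnil3 (x y : P) : b x (b x (b x y)) = 0 :=
    apply_apply_apply_eq_zero_of_isNilpotent hdim (hnil x) y
  have hli := linearIndependent_iterate_of_map_ne_zero (b x) hxxy (hnil3 x y)
  obtain ⟨p, q, r, hx⟩ := exists_coords_of_finrank_eq_three hdim hli x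
  obtain ⟨-, hp, hq⟩ := linearIndependent_triple_iff.1 hli 0 p q <| by
    have hxx := congrArg (b x) hx
    simpa [hb.alt.self_eq_zero, hnil3] using hxx.symm
  -- `x` spans the line of `b x (b x y)`, so it is an eigenvector of `b u` with `u = b x y`.
  obtain ⟨u, hux⟩ : ∃ u, x = -r • b u x := by
    refine ⟨b x y, ?_⟩
    rw [← hb.alt.neg x (b x y), smul_neg, neg_smul, neg_neg]
    simpa [hp, hq] using hx
  have hx0 : x = 0 := by
    calc x = -r • b u (-r • b u (-r • b u x)) := by rw [← hux, ← hux, ← hux]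
      _ = 0 := by simp [hnil3]
  simp [hx0] at hxxy

end Lie

section Classification

attribute [local simp] Fin.forall_fin_succ Fin.sum_univ_three

variable {P : Type*} [AddCommGroup P] [Module ℂ P] {m b : P →ₗ[ℂ] P →ₗ[ℂ] P}

section OrthogonalIdempotents

attribute [local simp] cm7 cm8 cm10

lemma IsPoisson.isoP_cm7 (h : IsPoisson m b) (hdim : finrank ℂ P = 3) {e f g : P}
    (hli : LinearIndependent ℂ ![e, f, g]) (he : m e e = e) (hf : m f f = f) (hg : m g g = g)
    (hef : m e f = 0) (heg : m e g = 0) (hfg : m f g = 0) : IsoP P m b (sb cm7) 0 := by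
  refine h.isoP hdim hli ?_ ?_ ?_ ?_ <;>
    simp [*, h.bracket_eq_zero_of_idempotents hdim hli he hf]

lemma IsPoisson.isoP_cm8 (h : IsPoisson m b) (hdim : finrank ℂ P = 3) {e f z : P}
    (hli : LinearIndependent ℂ ![e, f, z]) (he : m e e = e) (hf : m f f = f) (hef : m e f = 0)
    (hez : m e z = 0) (hfz : m f z = z) (hzz : m z z = 0) : IsoP P m b (sb cm8) 0 := by
  refine h.isoP hdim hli ?_ ?_ ?_ ?_ <;>
    simp [*, h.bracket_eq_zero_of_idempotents hdim hli he hf]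

lemma IsPoisson.isoP_cm7_or_cm8 (h : IsPoisson m b) (hdim : finrank ℂ P = 3) {e f z : P}
    (hli : LinearIndependent ℂ ![e, f, z]) (he : m e e = e) (hf : m f f = f) (hef : m e f = 0)
    (hez : m e z = 0) (hfz : m f z = z) :
    IsoP P m b (sb cm7) 0 ∨ IsoP P m b (sb cm8) 0 := by
  have he0 : e ≠ 0 := hli.ne_zero 0
  obtain ⟨r, p, s, hzz⟩ := exists_coords_of_finrank_eq_three hdim hli (m z z)
  have hr : r = 0 := by
    have hezz : m e (m z z) = 0 := by rw [← h.assoc, hez, map_zero, LinearMap.zero_apply]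
    simpa [hzz, he, hef, hez, he0] using hezz
  rw [hr, zero_smul, zero_add] at hzz
  rcases h.exists_sq_zero_or_idempotent hf hfz hzz with ⟨a, hsq⟩ | ⟨a, c, hc, hg⟩
  · have hli' : LinearIndependent ℂ ![e, f, z + a • f] :=
      linearIndependent_triple_of_det_ne_zero hli
        (show !![1, 0, 0; 0, 1, 0; 0, a, 1].det ≠ 0 by simp [Matrix.det_fin_three])
        (by module) (by module) (by module)
    exact .inr (h.isoP_cm8 hdim hli' he hf hef (by simp [hez, hef]) (by simp [hfz, hf]) hsq)
  · set g := a • f + c • z with hg_def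
    have hfg : m f g = g := by simp [hg_def, hf, hfz]
    have hli' : LinearIndependent ℂ ![e, f - g, g] :=
      linearIndependent_triple_of_det_ne_zero hli
        (show !![1, 0, 0; 0, 1 - a, -c; 0, a, c].det ≠ 0 by
          simpa [Matrix.det_fin_three, sub_mul, mul_comm c] using hc)
        (by module) (by module) (by module)
    have heg : m e g = 0 := by simp [hg_def, hef, hez]
    exact .inl (h.isoP_cm7 hdim hli' he (by simp [hf, hfg, h.comm g f, hg]) hg
      (by simp [hef, heg]) heg (by simp [hfg, hg]))

lemma IsPoisson.isoP_cm7_or_cm10 (h : IsPoisson m b) (hdim : finrank ℂ P = 3) {e f z : P}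
    (hli : LinearIndependent ℂ ![e, f, z]) (he : m e e = e) (hf : m f f = f) (hef : m e f = 0)
    (hez : m e z = 0) (hfz : m f z = 0) :
    IsoP P m b (sb cm7) 0 ∨ IsoP P m b (sb cm10) 0 := by
  have he0 : e ≠ 0 := hli.ne_zero 0
  have hf0 : f ≠ 0 := hli.ne_zero 1
  have hfe : m f e = 0 := (h.comm f e).trans hef
  obtain ⟨r, p, s, hzz⟩ := exists_coords_of_finrank_eq_three hdim hli (m z z)
  have hr : r = 0 := by
    have hezz : m e (m z z) = 0 := by rw [← h.assoc, hez, map_zero, LinearMap.zero_apply]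
    simpa [hzz, he, hef, hez, he0] using hezz
  have hp : p = 0 := by
    have hfzz : m f (m z z) = 0 := by rw [← h.assoc, hfz, map_zero, LinearMap.zero_apply]
    simpa [hzz, hf, hfe, hfz, hf0] using hfzz
  simp only [hr, hp, zero_smul, zero_add] at hzz
  by_cases hs : s = 0
  · right
    refine h.isoP hdim hli ?_ ?_ ?_ ?_ <;>
      simp [*, h.bracket_eq_zero_of_idempotents hdim hli he hf]
  · have hli' : LinearIndependent ℂ ![e, f, s⁻¹ • z] :=
      linearIndependent_triple_of_det_ne_zero hli
        (show !![1, 0, 0; 0, 1, 0; 0, 0, s⁻¹].det ≠ 0 by simpa [Matrix.det_fin_three])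
        (by module) (by module) (by module)
    exact .inl (h.isoP_cm7 hdim hli' he hf (by simp [hzz, hs]) hef (by simp [hez])
      (by simp [hfz]))

lemma IsPoisson.isoP_of_hasOrthogonalIdempotents (h : IsPoisson m b) (hdim : finrank ℂ P = 3)
    (horth : HasOrthogonalIdempotents m) :
    IsoP P m b (sb cm7) 0 ∨ IsoP P m b (sb cm8) 0 ∨ IsoP P m b (sb cm10) 0 := by
  obtain ⟨e, f, he0, hf0, he, hf, hef⟩ := horth
  have hfe : m f e = 0 := (h.comm f e).trans hef
  obtain ⟨z, hli, ⟨hez, hfz⟩ | ⟨hez, hfz⟩ | ⟨hez, hfz⟩⟩ :=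
    h.exists_peirce_vector (by omega) (linearIndependent_of_orthogonal_idempotents hf0 he0 he hef)
      he hf hef
  · have hli' : LinearIndependent ℂ ![f, e, z] :=
      linearIndependent_triple_of_det_ne_zero hli
        (show !![0, 1, 0; 1, 0, 0; 0, 0, 1].det ≠ 0 by simp [Matrix.det_fin_three])
        (by module) (by module) (by module)
    exact (h.isoP_cm7_or_cm8 hdim hli' hf he hfe hfz hez).imp_right .inl
  · exact (h.isoP_cm7_or_cm8 hdim hli he hf hef hez hfz).imp_right .inl
  · exact (h.isoP_cm7_or_cm10 hdim hli he hf hef hez hfz).imp_right .inr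

end OrthogonalIdempotents

section PrimitiveIdempotent

attribute [local simp] cm9 cm11 cm12 cm17 cm19 cb18

lemma IsPoisson.isoP_cm12 (h : IsPoisson m b) (hdim : finrank ℂ P = 3) {e u : P} (he0 : e ≠ 0)
    (he : m e e = e) (heu : m e u = 0) (hu2 : m u u ≠ 0) (hu3 : m u (m u u) = 0) :
    IsoP P m b (sb cm12) 0 := by
  have heuu : m e (m u u) = 0 := by simp [← h.assoc, heu]
  have hli : LinearIndependent ℂ ![e, u, m u u] := by
    refine linearIndependent_vecCons_of_map_ne_zero (m e)
      (linearIndependent_vecCons_of_map_ne_zero (m u) ?_ ?_ hu2) ?_ (he.symm ▸ he0) <;>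
      simp [*]
  have hbuu : b u (m u u) = 0 := by simp [h.leibniz_right, h.alt.self_eq_zero]
  refine h.isoP hdim hli ?_ ?_ ?_ ?_ <;> simp [*, h.assoc, h.bracket_idempotent he]

lemma IsPoisson.isoP_cm19 (h : IsPoisson m b) (hdim : finrank ℂ P = 3) {e y z : P}
    (hli : LinearIndependent ℂ ![e, y, z]) (he : m e e = e) (hey : m e y = 0) (hez : m e z = 0)
    (hyy : m y y = 0) (hyz : m y z = 0) (hzz : m z z = 0) :
    IsoP P m b (sb cm19) 0 ∨ IsoP P m b (sb cm19) (sb cb18) := by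
  have he0 : e ≠ 0 := hli.ne_zero 0
  have hzy : m z y = 0 := (h.comm z y).trans hyz
  obtain ⟨α, β, γ, hb⟩ := exists_coords_of_finrank_eq_three hdim hli (b y z)
  have hα : α = 0 := by
    have heb : m e (b y z) = 0 := by
      have := h.leibniz_right y e z
      simpa [hez, ← h.alt.neg e y, h.bracket_idempotent he] using this.symm
    simpa [hb, he, hey, hez, he0] using heb
  rw [hα, zero_smul, zero_add] at hb
  by_cases hb0 : b y z = 0
  · left
    refine h.isoP hdim hli ?_ ?_ ?_ ?_ <;> simp [*, -hb, h.bracket_idempotent he]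
  · right
    obtain ⟨p, q, hli', hb'⟩ := exists_bracket_eq_left h.alt hli hb hb0
    refine h.isoP hdim hli' ?_ ?_ ?_ ?_
    · simp
    · simp [he, hey, hez, hyy, hyz, hzy, hzz]
    · simp
    · simp [h.bracket_idempotent he, hb', -map_add, -map_smul]

lemma IsPoisson.isoP_of_peirce_finrank_one (h : IsPoisson m b) (hdim : finrank ℂ P = 3)
    (hprim : ¬HasOrthogonalIdempotents m) {e y z : P} (hli : LinearIndependent ℂ ![e, y, z])
    (he : m e e = e) (hey : m e y = 0) (hez : m e z = 0) :
    IsoP P m b (sb cm12) 0 ∨ IsoP P m b (sb cm19) 0 ∨ IsoP P m b (sb cm19) (sb cb18) := by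
  have : FiniteDimensional ℂ P := .of_finrank_pos (by omega)
  have he0 : e ≠ 0 := hli.ne_zero 0
  by_cases hsq : ∀ u, m e u = 0 → m u u = 0
  · have hyz : m y z = 0 := h.mul_eq_zero_of_sq_eq_zero (hsq y hey) (hsq z hez)
      (hsq _ (by simp [hey, hez]))
    exact .inr (h.isoP_cm19 hdim hli he hey hez (hsq y hey) hyz (hsq z hez))
  · push Not at hsq
    obtain ⟨u, heu, hu2⟩ := hsq
    have hu4 : m u (m u (m u u)) = 0 := apply_apply_apply_eq_zero_of_isNilpotent hdim
      (h.isNilpotent_of_map_eq_zero hprim he0 he heu) u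
    refine .inl (h.isoP_cm12 hdim he0 he heu hu2 (of_not_not fun hu3 ↦ he0 ?_))
    obtain ⟨p, q, r, hpqr⟩ := exists_coords_of_finrank_eq_three hdim
      (linearIndependent_iterate_of_map_ne_zero (m u) hu3 hu4) e
    calc e = m e e := he.symm
      _ = m e (p • u + q • m u u + r • m u (m u u)) := by rw [← hpqr]
      _ = 0 := by simp [heu, h.left_comm e u]

lemma IsPoisson.isoP_cm11 (h : IsPoisson m b) (hdim : finrank ℂ P = 3) {e y z : P}
    (hli : LinearIndependent ℂ ![e, y, z]) (he : m e e = e) (hey : m e y = y) (hez : m e z = 0)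
    (hyy : m y y = 0) (hyz : m y z = 0) (hzz : m z z = 0) : IsoP P m b (sb cm11) 0 := by
  have hbe x : b x e = 0 := by simp [← h.alt.neg e x, h.bracket_idempotent he]
  have hbyz : b y z = 0 := by
    calc b y z = b (m e y) z := by rw [hey]
      _ = m e (b y z) := by simp [h.leibniz, h.bracket_idempotent he]
      _ = b y (m e z) := by simp [h.leibniz_right, hbe]
      _ = 0 := by rw [hez, map_zero]
  refine h.isoP hdim hli ?_ ?_ ?_ ?_ <;> simp [*, h.bracket_idempotent he]

lemma IsPoisson.isoP_of_peirce_finrank_two (h : IsPoisson m b) (hdim : finrank ℂ P = 3)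
    (hprim : ¬HasOrthogonalIdempotents m) {e y z : P} (hli : LinearIndependent ℂ ![e, y, z])
    (he : m e e = e) (hey : m e y = y) (hez : m e z = 0) : IsoP P m b (sb cm11) 0 := by
  have : FiniteDimensional ℂ P := .of_finrank_pos (by omega)
  have he0 : e ≠ 0 := hli.ne_zero 0
  have hz0 : z ≠ 0 := hli.ne_zero 2
  have hyz : m y z = 0 := by rw [← hey, h.comm e y, h.assoc, hez, map_zero]
  obtain ⟨p, s, t, hyy⟩ := exists_coords_of_finrank_eq_three hdim hli (m y y)
  obtain ⟨p', s', t', hzz⟩ := exists_coords_of_finrank_eq_three hdim hli (m z z)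
  have ht : t = 0 := by
    have heyy : m e (m y y) = m y y := by rw [← h.assoc, hey]
    simpa [hyy, he, hey, hez, hz0] using heyy
  rw [ht, zero_smul, add_zero] at hyy
  obtain ⟨hp', hs', -⟩ := linearIndependent_triple_iff.1 hli p' s' 0 <| by
    have hezz : m e (m z z) = 0 := by rw [← h.assoc, hez, LinearMap.map_zero₂]
    simpa [hzz, he, hey, hez] using hezz
  simp only [hp', hs', zero_smul, zero_add] at hzz
  have ht' : t' = 0 := by
    have hnil := h.isNilpotent_of_map_eq_zero hprim he0 he hez
    simpa [hzz, hz0] using apply_apply_apply_eq_zero_of_isNilpotent hdim hnil z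
  rcases h.exists_sq_zero_or_idempotent he hey hyy with ⟨a, hsq⟩ | ⟨a, c, hc, hg⟩
  · have hli' : LinearIndependent ℂ ![e, y + a • e, z] :=
      linearIndependent_triple_of_det_ne_zero hli
        (show !![1, 0, 0; a, 1, 0; 0, 0, 1].det ≠ 0 by simp [Matrix.det_fin_three])
        (by module) (by module) (by module)
    exact h.isoP_cm11 hdim hli' he (by simp [he, hey]) hez hsq (by simp [hyz, hez])
      (by simp [hzz, ht'])
  · refine absurd ?_ hc
    by_cases hg0 : a • e + c • y = 0
    · exact (linearIndependent_triple_iff.1 hli a c 0 (by simpa using hg0)).2.1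
    · have hge := h.idempotent_eq_of_not_hasOrthogonalIdempotents hprim he hg
        (by simp [he, hey]) hg0
      exact (linearIndependent_triple_iff.1 hli (a - 1) c 0
        (by linear_combination (norm := module) hge)).2.1

lemma IsPoisson.isoP_cm9 (h : IsPoisson m b) (hdim : finrank ℂ P = 3) {e u : P}
    (hunit : ∀ x, m e x = x) (hu2 : m u u ≠ 0) (hu3 : m u (m u u) = 0) :
    IsoP P m b (sb cm9) 0 := by
  have hue : m u e = u := (h.comm u e).trans (hunit u)
  have hli : LinearIndependent ℂ ![e, u, m u u] := by
    simpa [hue] using linearIndependent_iterate_of_map_ne_zero (m u) (x := e) (by simpa [hue])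
      (by simpa [hue])
  have hbuu : b u (m u u) = 0 := by simp [h.leibniz_right, h.alt.self_eq_zero]
  refine h.isoP hdim hli ?_ ?_ ?_ ?_ <;>
    simp [*, h.assoc, h.bracket_idempotent (hunit e)]

lemma IsPoisson.isoP_cm17 (h : IsPoisson m b) (hdim : finrank ℂ P = 3) {e y z : P}
    (hli : LinearIndependent ℂ ![e, y, z]) (hunit : ∀ x, m e x = x)
    (hyy : m y y = 0) (hyz : m y z = 0) (hzz : m z z = 0) :
    IsoP P m b (sb cm17) 0 ∨ IsoP P m b (sb cm17) (sb cb18) := by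
  have hzy : m z y = 0 := (h.comm z y).trans hyz
  have hz0 : z ≠ 0 := hli.ne_zero 2
  obtain ⟨α, β, γ, hb⟩ := exists_coords_of_finrank_eq_three hdim hli (b y z)
  have hα : α = 0 := by
    have hzb : m z (b y z) = 0 := by
      have h2 := h.leibniz_right y z z
      rw [hzz, map_zero, h.comm (b y z), ← two_smul ℂ] at h2
      exact (smul_eq_zero.1 h2.symm).resolve_left two_ne_zero
    simpa [hb, h.comm z e, hunit, hzy, hzz, hz0] using hzb
  rw [hα, zero_smul, zero_add] at hb
  by_cases hb0 : b y z = 0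
  · left
    refine h.isoP hdim hli ?_ ?_ ?_ ?_ <;> simp [*, -hb, h.bracket_idempotent (hunit e)]
  · right
    obtain ⟨p, q, hli', hb'⟩ := exists_bracket_eq_left h.alt hli hb hb0
    refine h.isoP hdim hli' ?_ ?_ ?_ ?_
    · simp
    · simp [hunit, hyy, hyz, hzy, hzz]
    · simp
    · simp [h.bracket_idempotent (hunit e), hb', -map_add, -map_smul]

lemma IsPoisson.isoP_of_unit (h : IsPoisson m b) (hdim : finrank ℂ P = 3)
    (hprim : ¬HasOrthogonalIdempotents m) {e : P} (he0 : e ≠ 0) (hunit : ∀ x, m e x = x) :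
    IsoP P m b (sb cm9) 0 ∨ IsoP P m b (sb cm17) 0 ∨ IsoP P m b (sb cm17) (sb cb18) := by
  have : FiniteDimensional ℂ P := .of_finrank_pos (by omega)
  by_cases hsq : ∀ u, IsNilpotent (m u) → m u u = 0
  · right
    obtain ⟨y, z, hli⟩ := exists_linearIndependent_triple_of_ne_zero (K := ℂ) (by omega) he0
    obtain ⟨c, hy⟩ := h.exists_isNilpotent_sub_smul hprim he0 hunit y
    obtain ⟨d, hz⟩ := h.exists_isNilpotent_sub_smul hprim he0 hunit z
    have hli' : LinearIndependent ℂ ![e, y - c • e, z - d • e] :=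
      linearIndependent_triple_of_det_ne_zero hli
        (show !![1, 0, 0; -c, 1, 0; -d, 0, 1].det ≠ 0 by simp [Matrix.det_fin_three])
        (by module) (by module) (by module)
    exact h.isoP_cm17 hdim hli' hunit (hsq _ hy)
      (h.mul_eq_zero_of_sq_eq_zero (hsq _ hy) (hsq _ hz) (hsq _ (h.isNilpotent_add hy hz)))
      (hsq _ hz)
  · push Not at hsq
    obtain ⟨u, hu, hu2⟩ := hsq
    have hu3 : m u (m u u) = 0 := by
      simpa [h.comm u e, hunit] using apply_apply_apply_eq_zero_of_isNilpotent hdim hu e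
    exact .inl (h.isoP_cm9 hdim hunit hu2 hu3)

lemma IsPoisson.isoP_of_primitive_idempotent (h : IsPoisson m b) (hdim : finrank ℂ P = 3)
    (hprim : ¬HasOrthogonalIdempotents m) {e : P} (he0 : e ≠ 0) (he : m e e = e) :
    IsoP P m b (sb cm9) 0 ∨ IsoP P m b (sb cm11) 0 ∨ IsoP P m b (sb cm12) 0 ∨
      IsoP P m b (sb cm17) 0 ∨ IsoP P m b (sb cm17) (sb cb18) ∨
      IsoP P m b (sb cm19) 0 ∨ IsoP P m b (sb cm19) (sb cb18) := by
  by_cases hunit : ∀ x, m e x = x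
  · rcases h.isoP_of_unit hdim hprim he0 hunit with hP | hP | hP <;>
      simp only [hP, true_or, or_true]
  · push Not at hunit
    obtain ⟨x, hx⟩ := hunit
    have hez : m e (m e x - x) = 0 := by simp [← h.assoc, he]
    have hli : LinearIndependent ℂ ![e, m e x - x] :=
      linearIndependent_vecCons_of_map_ne_zero (m e) (by simpa using sub_ne_zero.2 hx)
        (by simpa using hez) (he.symm ▸ he0)
    obtain ⟨y, hli, hey | hey⟩ :=
      h.exists_linearIndependent_triple_peirce (by omega) he hli
    · have hli' : LinearIndependent ℂ ![e, y, m e x - x] :=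
        linearIndependent_triple_of_det_ne_zero hli
          (show !![1, 0, 0; 0, 0, 1; 0, 1, 0].det ≠ 0 by simp [Matrix.det_fin_three])
          (by module) (by module) (by module)
      exact .inr (.inl (h.isoP_of_peirce_finrank_two hdim hprim hli' he hey hez))
    · rcases h.isoP_of_peirce_finrank_one hdim hprim hli he hez hey with hP | hP | hP <;>
        simp only [hP, true_or, or_true]

end PrimitiveIdempotent

section Nilpotent

attribute [local simp] cm6 cm13 cm16 cb14 cb15 cb16

lemma IsPoisson.isoP_cm6 (h : IsPoisson m b) (hdim : finrank ℂ P = 3) {u : P}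
    (hu3 : m u (m u u) ≠ 0) (hu4 : m u (m u (m u u)) = 0) : IsoP P m b (sb cm6) 0 := by
  have hli := linearIndependent_iterate_of_map_ne_zero (m u) hu3 hu4
  have hb2 : b u (m u u) = 0 := by simp [h.leibniz_right, h.alt.self_eq_zero]
  have hb3 : b u (m u (m u u)) = 0 := by simp [h.leibniz_right, h.alt.self_eq_zero]
  have hb23 : b (m u u) (m u (m u u)) = 0 := by simp [h.leibniz, hb3]
  refine h.isoP hdim hli ?_ ?_ ?_ ?_ <;> simp [*, h.assoc]

lemma IsPoisson.isoP_cm13 (h : IsPoisson m b) (hdim : finrank ℂ P = 3)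
    (h3 : ∀ x y z, m x (m y z) = 0) {x z : P} (hli : LinearIndependent ℂ ![x, m x x, z])
    (hxz : m x z = 0) (hzz : m z z = 0) :
    IsoP P m b (sb cm13) 0 ∨ IsoP P m b (sb cm13) (sb cb14) ∨
      IsoP P m b (sb cm13) (sb cb15) := by
  have hxx0 : m x x ≠ 0 := hli.ne_zero 1
  have hbxx : b x (m x x) = 0 := by simp [h.leibniz_right, h.alt.self_eq_zero]
  have hxb : m x (b x z) = 0 := by
    simpa [hxz, h.alt.self_eq_zero] using (h.leibniz_right x x z).symm
  have hbxxz : b (m x x) z = 0 := by simp [h.leibniz, h.comm _ x, hxb]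
  obtain ⟨α, β, γ, hb⟩ := exists_coords_of_finrank_eq_three hdim hli (b x z)
  have hα : α = 0 := by simpa [hb, h3, hxz, hxx0] using hxb
  rw [hα, zero_smul, zero_add] at hb
  by_cases hγ : γ = 0
  · rw [hγ, zero_smul, add_zero] at hb
    by_cases hβ : β = 0
    · left
      refine h.isoP hdim hli ?_ ?_ ?_ ?_ <;> simp [*, h.assoc]
    · right; right
      have hli' : LinearIndependent ℂ ![x, m x x, β⁻¹ • z] :=
        linearIndependent_triple_of_det_ne_zero hli
          (show !![1, 0, 0; 0, 1, 0; 0, 0, β⁻¹].det ≠ 0 by simpa [Matrix.det_fin_three])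
          (by module) (by module) (by module)
      refine h.isoP hdim hli' ?_ ?_ ?_ ?_ <;> simp [*, h.assoc]
  · right; left
    have hli' : LinearIndependent ℂ ![γ⁻¹ • x, (γ⁻¹ * γ⁻¹) • m x x, β • m x x + γ • z] :=
      linearIndependent_triple_of_det_ne_zero hli
        (show !![γ⁻¹, 0, 0; 0, γ⁻¹ * γ⁻¹, 0; 0, β, γ].det ≠ 0 by simpa [Matrix.det_fin_three])
        (by module) (by module) (by module)
    refine h.isoP hdim hli' ?_ ?_ ?_ ?_ <;>
      simp [*, h.assoc, h.alt.self_eq_zero, smul_smul]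

lemma IsPoisson.isoP_cm16 (h : IsPoisson m b) (hdim : finrank ℂ P = 3)
    (h3 : ∀ x y z, m x (m y z) = 0) {x y : P} (hli : LinearIndependent ℂ ![x, y, m x y])
    (hxx : m x x = 0) (hyy : m y y = 0) : ∃ α : ℂ, IsoP P m b (sb cm16) (sb (cb16 α)) := by
  have hxy0 : m x y ≠ 0 := hli.ne_zero 2
  obtain ⟨α, β, γ, hb⟩ := exists_coords_of_finrank_eq_three hdim hli (b x y)
  have hβ : β = 0 := by
    have hxb : (2 : ℂ) • m x (b x y) = 0 := by
      rw [two_smul, ← LinearMap.map_zero₂ b y, ← hxx, h.leibniz, h.comm _ x]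
    simpa [hb, hxx, h3, hxy0] using hxb
  have hα : α = 0 := by
    have hyb : (2 : ℂ) • m y (b x y) = 0 := by
      rw [two_smul, ← map_zero (b x), ← hyy, h.leibniz_right, h.comm _ y]
    simpa [hb, hyy, h3, h.comm y x, hxy0] using hyb
  simp only [hα, hβ, zero_smul, zero_add] at hb
  have hbx : b x (m x y) = 0 := by simp [h.leibniz_right, h.alt.self_eq_zero, hb, h3]
  have hby : b y (m x y) = 0 := by
    simp [h.leibniz_right, h.alt.self_eq_zero, ← h.alt.neg x y, hb, h.assoc, h3]
  exact ⟨γ, by refine h.isoP hdim hli ?_ ?_ ?_ ?_ <;> simp [*, h.assoc]⟩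

lemma IsPoisson.isoP_of_forall_mul_mul_eq_zero (h : IsPoisson m b) (hdim : finrank ℂ P = 3)
    (hm : m ≠ 0) (h3 : ∀ x y z, m x (m y z) = 0) :
    IsoP P m b (sb cm13) 0 ∨ IsoP P m b (sb cm13) (sb cb14) ∨ IsoP P m b (sb cm13) (sb cb15) ∨
      ∃ α : ℂ, IsoP P m b (sb cm16) (sb (cb16 α)) := by
  obtain ⟨x, hx⟩ : ∃ x, m x x ≠ 0 := by
    contrapose! hm
    exact LinearMap.ext₂ fun x y ↦ h.mul_eq_zero_of_sq_eq_zero (hm x) (hm y) (hm _)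
  obtain ⟨z, d, hli, hxz, hzz⟩ := h.exists_orthogonal_vector hdim h3 hx
  have hzx : m z x = 0 := (h.comm z x).trans hxz
  by_cases hd : d = 0
  · rcases h.isoP_cm13 hdim h3 hli hxz (by simp [hzz, hd]) with hP | hP | hP <;>
      simp only [hP, true_or, or_true]
  · -- `x + t z` and `x - t z` span the isotropic lines of the quadratic form `m` on `x`, `z`.
    obtain ⟨t, ht⟩ := IsAlgClosed.exists_eq_mul_self (-d⁻¹)
    have htd : t * (t * d) = -1 := by rw [← mul_assoc, ← ht, neg_mul, inv_mul_cancel₀ hd]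
    have ht0 : t ≠ 0 := by
      rintro rfl
      simp at htd
    have hprod : m (x + t • z) (x - t • z) = (2 : ℂ) • m x x := by
      simp only [map_sub, map_add, map_smul, LinearMap.add_apply, LinearMap.smul_apply, hxz, hzx,
        hzz]
      match_scalars
      linear_combination -htd
    have hli' : LinearIndependent ℂ ![x + t • z, x - t • z, m (x + t • z) (x - t • z)] :=
      linearIndependent_triple_of_det_ne_zero hli
        (show !![1, 0, t; 1, 0, -t; 0, 2, 0].det ≠ 0 by
          simpa [Matrix.det_fin_three, ← two_mul, ← sub_eq_add_neg] using ht0)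
        (by module) (by module) (by rw [hprod]; module)
    refine .inr (.inr (.inr (h.isoP_cm16 hdim h3 hli' ?_ ?_))) <;>
      simp [hxz, hzx, hzz, smul_smul, htd]

lemma IsPoisson.isoP_of_forall_isNilpotent (h : IsPoisson m b) (hdim : finrank ℂ P = 3)
    (hm : m ≠ 0) (hnil : ∀ x, IsNilpotent (m x)) :
    IsoP P m b (sb cm6) 0 ∨ IsoP P m b (sb cm13) 0 ∨ IsoP P m b (sb cm13) (sb cb14) ∨
      IsoP P m b (sb cm13) (sb cb15) ∨ ∃ α : ℂ, IsoP P m b (sb cm16) (sb (cb16 α)) := by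
  by_cases hcube : ∀ x, m x (m x x) = 0
  · exact .inr <| h.isoP_of_forall_mul_mul_eq_zero hdim hm <|
      h.mul_mul_eq_zero_of_cube_eq_zero hcube
  · push Not at hcube
    obtain ⟨u, hu⟩ := hcube
    exact .inl <| h.isoP_cm6 hdim hu <| apply_apply_apply_eq_zero_of_isNilpotent hdim (hnil u) u

end Nilpotent

section ZeroProduct

attribute [local simp] cb2 cb3 cb4 cb5

lemma IsLie.isoP_cb2 (hb : IsLie b) (hdim : finrank ℂ P = 3) {x y : P} (hxy : b x y ≠ 0)
    (hx : b x (b x y) = 0) (hy : b y (b x y) = 0) : IsoP P 0 b 0 (sb cb2) := by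
  have hli := linearIndependent_of_bracket_bracket_eq_zero hb.alt hxy hx hy
  refine hb.isPoisson_zero.isoP hdim hli ?_ ?_ ?_ ?_ <;> simp [*]

lemma IsLie.isoP_of_forall_isNilpotent (hb : IsLie b) (hdim : finrank ℂ P = 3)
    (hnil : ∀ x, IsNilpotent (b x)) : IsoP P 0 b 0 0 ∨ IsoP P 0 b 0 (sb cb2) := by
  have hbb := hb.bracket_bracket_eq_zero_of_forall_isNilpotent hdim hnil
  by_cases h0 : b = 0
  · have : FiniteDimensional ℂ P := .of_finrank_pos (by omega)
    left
    refine hb.isPoisson_zero.isoP hdim (finBasisOfFinrankEq ℂ P hdim).linearIndependent ?_ ?_ ?_ ?_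
      <;> simp [h0]
  · obtain ⟨x, y, hxy⟩ : ∃ x y, b x y ≠ 0 := by
      contrapose! h0
      exact LinearMap.ext₂ h0
    exact .inr (hb.isoP_cb2 hdim hxy (hbb x y) (by simpa [← hb.alt.neg y x] using hbb y x))

lemma IsLie.isoP_cb4 (hb : IsLie b) (hdim : finrank ℂ P = 3) {x y z : P}
    (hli : LinearIndependent ℂ ![x, y, z]) (hxy : b x y = y) {μ : ℂ} (hxz : b x z = μ • z)
    (hyz : b y z = 0) : IsoP P 0 b 0 (sb (cb4 μ)) := by
  refine hb.isPoisson_zero.isoP hdim hli ?_ ?_ ?_ ?_ <;> simp [*]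

lemma IsLie.isoP_cb4_of_bracket_mem_span (hb : IsLie b) (hdim : finrank ℂ P = 3) {x y z : P}
    (hli : LinearIndependent ℂ ![x, y, z]) (hxy : b x y = y) {p : ℂ} (hxz : b x z = p • x) :
    IsoP P 0 b 0 (sb (cb4 0)) := by
  have hyx : b y x = -y := by rw [← hb.alt.neg, hxy]
  obtain ⟨α, β, γ, hyz⟩ := exists_coords_of_finrank_eq_three hdim hli (b y z)
  obtain ⟨hα, hp, hγ⟩ := linearIndependent_triple_iff.1 hli (γ * p - α) p (-γ) <| by
    have hjac := hb.jacobi x y z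
    rw [hxy, hxz, hyz] at hjac
    simp only [map_add, map_smul, hb.alt.self_eq_zero, hxy, hxz, hyx] at hjac
    linear_combination (norm := module) hjac
  rw [neg_eq_zero] at hγ
  have hα0 : α = 0 := by simpa [hγ] using hα
  have hli' : LinearIndependent ℂ ![x, y, z + β • x] :=
    linearIndependent_triple_of_det_ne_zero hli
      (show !![1, 0, 0; 0, 1, 0; β, 0, 1].det ≠ 0 by simp [Matrix.det_fin_three])
      (by module) (by module) (by module)
  exact hb.isoP_cb4 hdim hli' hxy (by simp [hxz, hp, hb.alt.self_eq_zero])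
    (by simp [hyz, hyx, hα0, hγ])

lemma IsLie.isoP_cb4_or_cb5 (hb : IsLie b) (hdim : finrank ℂ P = 3) {x y z : P}
    (hli : LinearIndependent ℂ ![x, y, z]) (hxy : b x y = y) {μ : ℂ} (hμ : μ ≠ 0)
    (hxz : b x z = μ • z) : IsoP P 0 b 0 (sb (cb4 μ)) ∨ IsoP P 0 b 0 (sb cb5) := by
  have hyx : b y x = -y := by rw [← hb.alt.neg, hxy]
  have hzx : b z x = -(μ • z) := by rw [← hb.alt.neg, hxz]
  obtain ⟨α, β, γ, hyz⟩ := exists_coords_of_finrank_eq_three hdim hli (b y z)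
  obtain ⟨hα, hβ, hγ⟩ := linearIndependent_triple_iff.1 hli ((1 + μ) * α) (μ * β) γ <| by
    have hjac := hb.jacobi x y z
    rw [hxy, hxz, map_smul, hyz] at hjac
    simp only [map_add, map_smul, hb.alt.self_eq_zero, hxy, hxz] at hjac
    linear_combination (norm := module) -hjac
  have hβ0 : β = 0 := (mul_eq_zero.1 hβ).resolve_left hμ
  simp only [hβ0, hγ, zero_smul, add_zero] at hyz
  by_cases hα0 : α = 0
  · exact .inl (hb.isoP_cb4 hdim hli hxy hxz (by simp [hyz, hα0]))
  · right
    have hμ1 : μ = -1 := eq_neg_of_add_eq_zero_right ((mul_eq_zero.1 hα).resolve_right hα0)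
    have hli' : LinearIndependent ℂ ![y, (2 / α) • z, (2 : ℂ) • x] :=
      linearIndependent_triple_of_det_ne_zero hli
        (show !![0, 1, 0; 0, 0, 2 / α; 2, 0, 0].det ≠ 0 by simpa [Matrix.det_fin_three])
        (by module) (by module) (by module)
    have hα2 : α * (2 / α) = 2 := mul_div_cancel₀ 2 hα0
    refine hb.isPoisson_zero.isoP hdim hli' ?_ ?_ ?_ ?_ <;> simp [*, smul_smul, mul_comm]

lemma IsLie.isoP_cb3_or_cb4 (hb : IsLie b) (hdim : finrank ℂ P = 3) {x y z : P}
    (hli : LinearIndependent ℂ ![x, y, z]) (hxy : b x y = y) {q : ℂ} (hxz : b x z = q • y + z) :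
    IsoP P 0 b 0 (sb cb3) ∨ IsoP P 0 b 0 (sb (cb4 1)) := by
  obtain ⟨α, β, γ, hyz⟩ := exists_coords_of_finrank_eq_three hdim hli (b y z)
  obtain ⟨hα, hβ, hγ⟩ := linearIndependent_triple_iff.1 hli (2 * α) (β - γ * q) γ <| by
    have hjac := hb.jacobi x y z
    rw [hxy, hxz, map_add, map_smul, hb.alt.self_eq_zero, hyz] at hjac
    simp only [map_add, map_smul, hb.alt.self_eq_zero, hxy, hxz] at hjac
    linear_combination (norm := module) -hjac
  have hyz0 : b y z = 0 := by
    have hα0 : α = 0 := by simpa using hα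
    have hβ0 : β = 0 := by simpa [hγ] using hβ
    simp [hyz, hα0, hβ0, hγ]
  by_cases hq : q = 0
  · exact .inr (hb.isoP_cb4 hdim hli hxy (by simp [hxz, hq]) hyz0)
  · left
    have hli' : LinearIndependent ℂ ![x, q • y, z] :=
      linearIndependent_triple_of_det_ne_zero hli
        (show !![1, 0, 0; 0, q, 0; 0, 0, 1].det ≠ 0 by simpa [Matrix.det_fin_three])
        (by module) (by module) (by module)
    refine hb.isPoisson_zero.isoP hdim hli' ?_ ?_ ?_ ?_ <;> simp [hxy, hxz, hyz0]

lemma IsLie.isoP_of_bracket_eq_right (hb : IsLie b) (hdim : finrank ℂ P = 3) {x y : P}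
    (hy0 : y ≠ 0) (hxy : b x y = y) :
    IsoP P 0 b 0 (sb cb3) ∨ (∃ α : ℂ, IsoP P 0 b 0 (sb (cb4 α))) ∨ IsoP P 0 b 0 (sb cb5) := by
  have hx0 : x ≠ 0 := by
    rintro rfl
    exact hy0 (by simpa using hxy.symm)
  have hpair : LinearIndependent ℂ ![y, x] :=
    linearIndependent_vecCons_of_map_ne_zero (b x) (by simpa) (by simp [hb.alt.self_eq_zero])
      (hxy.symm ▸ hy0)
  obtain ⟨z, hli⟩ :=
    exists_linearIndependent_triple_of_pair (by omega) (LinearIndependent.pair_symm_iff.1 hpair)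
  obtain ⟨p, q, μ, hxz⟩ := exists_coords_of_finrank_eq_three hdim hli (b x z)
  have hshear (r s : ℂ) : LinearIndependent ℂ ![x, y, z + r • x + s • y] :=
    linearIndependent_triple_of_det_ne_zero hli
      (show !![1, 0, 0; 0, 1, 0; r, s, 1].det ≠ 0 by simp [Matrix.det_fin_three])
      (by module) (by module) (by module)
  have hbr (r s : ℂ) : b x (z + r • x + s • y) = p • x + (q + s) • y + μ • z := by
    simp only [map_add, map_smul, hb.alt.self_eq_zero, hxy, hxz]
    module
  rcases eq_or_ne μ 0 with rfl | hμ0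
  · exact .inr <| .inl ⟨0, hb.isoP_cb4_of_bracket_mem_span hdim (hshear 0 (-q)) hxy (p := p)
      (by rw [hbr]; module)⟩
  rcases eq_or_ne μ 1 with rfl | hμ1
  · exact (hb.isoP_cb3_or_cb4 hdim (hshear p 0) hxy (q := q) (by rw [hbr]; module)).imp_right
      fun hP ↦ .inl ⟨1, hP⟩
  · have hxz' : b x (z + (p / μ) • x + (q / (μ - 1)) • y) =
        μ • (z + (p / μ) • x + (q / (μ - 1)) • y) := by
      have hμ1' : μ - 1 ≠ 0 := sub_ne_zero.2 hμ1
      rw [hbr]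
      match_scalars <;> field_simp
      ring
    exact .inr <| (hb.isoP_cb4_or_cb5 hdim (hshear _ _) hxy hμ0 hxz').imp_left fun hP ↦ ⟨μ, hP⟩

lemma IsLie.isoP (hb : IsLie b) (hdim : finrank ℂ P = 3) :
    IsoP P 0 b 0 0 ∨ IsoP P 0 b 0 (sb cb2) ∨ IsoP P 0 b 0 (sb cb3) ∨
      (∃ α : ℂ, IsoP P 0 b 0 (sb (cb4 α))) ∨ IsoP P 0 b 0 (sb cb5) := by
  by_cases hnil : ∀ x, IsNilpotent (b x)
  · exact (hb.isoP_of_forall_isNilpotent hdim hnil).imp_right .inl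
  · push Not at hnil
    obtain ⟨x, hx⟩ := hnil
    have : FiniteDimensional ℂ P := .of_finrank_pos (by omega)
    obtain ⟨μ, hμ0, hμ⟩ := exists_hasEigenvalue_ne_zero_of_not_isNilpotent hx
    obtain ⟨y, hy⟩ := hμ.exists_hasEigenvector
    have hxy : b (μ⁻¹ • x) y = y := by simp [hy.apply_eq_smul, hμ0]
    exact .inr (.inr (hb.isoP_of_bracket_eq_right hdim hy.2 hxy))

end ZeroProduct

end Classification

/-- The algebraic classification of the 3-dimensional complex Poisson algebras. -/
theorem stmt1 (P : Type*) [AddCommGroup P] [Module ℂ P]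
    (hdim : Module.finrank ℂ P = 3)
    (m b : P →ₗ[ℂ] P →ₗ[ℂ] P)
    (hcomm : ∀ x y, m x y = m y x)
    (hassoc : ∀ x y z, m (m x y) z = m x (m y z))
    (hanti : ∀ x y, b x y = - b y x)
    (hjac : ∀ x y z, b (b x y) z + b (b y z) x + b (b z x) y = 0)
    (hleib : ∀ x y z, b (m x y) z = m (b x z) y + m x (b y z)) :
    IsoP P m b 0 0 ∨                                     -- P₃,₁
    IsoP P m b 0 (sb cb2) ∨                              -- P₃,₂
    IsoP P m b 0 (sb cb3) ∨                              -- P₃,₃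
    (∃ α : ℂ, IsoP P m b 0 (sb (cb4 α))) ∨               -- P₃,₄^α
    IsoP P m b 0 (sb cb5) ∨                              -- P₃,₅
    IsoP P m b (sb cm6) 0 ∨                              -- P₃,₆
    IsoP P m b (sb cm7) 0 ∨                              -- P₃,₇
    IsoP P m b (sb cm8) 0 ∨                              -- P₃,₈
    IsoP P m b (sb cm9) 0 ∨                              -- P₃,₉
    IsoP P m b (sb cm10) 0 ∨                             -- P₃,₁₀
    IsoP P m b (sb cm11) 0 ∨                             -- P₃,₁₁
    IsoP P m b (sb cm12) 0 ∨                             -- P₃,₁₂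
    IsoP P m b (sb cm13) 0 ∨                             -- P₃,₁₃
    IsoP P m b (sb cm13) (sb cb14) ∨                     -- P₃,₁₄
    IsoP P m b (sb cm13) (sb cb15) ∨                     -- P₃,₁₅
    (∃ α : ℂ, IsoP P m b (sb cm16) (sb (cb16 α))) ∨      -- P₃,₁₆^α
    IsoP P m b (sb cm17) 0 ∨                             -- P₃,₁₇
    IsoP P m b (sb cm17) (sb cb18) ∨                     -- P₃,₁₈
    IsoP P m b (sb cm19) 0 ∨                             -- P₃,₁₉
    IsoP P m b (sb cm19) (sb cb18) := by                 -- P₃,₂₀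
  have : FiniteDimensional ℂ P := .of_finrank_pos (by omega)
  have : IsAddTorsionFree P := .of_isTorsionFree ℂ P
  have h : IsPoisson m b := ⟨⟨hcomm, hassoc⟩, .of_antisymm hanti hjac, hleib⟩
  by_cases hm : m = 0
  · subst hm
    rcases h.toIsLie.isoP hdim with hP | hP | hP | hP | hP <;> simp only [hP, true_or, or_true]
  by_cases horth : HasOrthogonalIdempotents m
  · rcases h.isoP_of_hasOrthogonalIdempotents hdim horth with hP | hP | hP <;>
      simp only [hP, true_or, or_true]
  by_cases hidem : ∃ e, e ≠ 0 ∧ m e e = e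
  · obtain ⟨e, he0, he⟩ := hidem
    rcases h.isoP_of_primitive_idempotent hdim horth he0 he with
      hP | hP | hP | hP | hP | hP | hP <;> simp only [hP, true_or, or_true]
  · have hnil (x : P) : IsNilpotent (m x) :=
      (h.exists_idempotent_or_isNilpotent x).resolve_left fun ⟨w, hw⟩ ↦ hidem ⟨m x w, hw⟩
    rcases h.isoP_of_forall_isNilpotent hdim hm hnil with hP | hP | hP | hP | hP <;>
      simp only [hP, true_or, or_true]
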